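/- arXiv:2109.01823 — 3 statements merged into one kernel-verified Lean document; each statement's English description precedes it below -/
import Mathlib

section
/- Fix u ∈ ℝ³ with (u₁, u₂) ≠ (0, 0) and fix real numbers γ, Δρ, Δη. For (Δγ, Δφ) ∈ ℝ², define the measurement m(Δγ, Δφ) = h(R_z(γ+Δγ)ᵀ u) − (Δρ, Δφ, Δη). Then for any two pairs (Δγ₁, Δφ₁) and (Δγ₂, Δφ₂) with Δγ₁ + Δφ₁ = Δγ₂ + Δφ₂, the first and third components of m(Δγ₁, Δφ₁) and m(Δγ₂, Δφ₂) are equal, and their second components are congruent modulo 2π. (In other words, the measurement depends on (Δγ, Δφ) only through the sum Δγ + Δφ, so a yaw bias Δγ and an azimuth bias Δφ with the same sum are indistinguishable from the measurements.) -/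
/-!
Writing the horizontal part of `u` as the complex number `u 0 + i u 1`, the matrix `(Rz θ)ᵀ`
multiplies it by `cos (-θ) + i sin (-θ)` and leaves `u 2` alone. Hence the radial and elevation
components of `hSph ((Rz θ)ᵀ u)` do not depend on `θ`, while the azimuth is `arg u - θ` as an
element of `Real.Angle = ℝ / 2πℤ`. Subtracting `Δφ` at `θ = γ + Δγ` leaves an angle in which only
the sum `Δγ + Δφ` occurs.
-/

open Matrix Real

/-- The rotation matrix about the z-axis by angle `θ`. -/
noncomputable def Rz (θ : ℝ) : Matrix (Fin 3) (Fin 3) ℝ :=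
  !![Real.cos θ, -Real.sin θ, 0;
     Real.sin θ,  Real.cos θ, 0;
     0, 0, 1]

/-- `atan2 b a`: the angle in `(−π, π]` of the planar point `(a, b)`. -/
noncomputable def atan2 (b a : ℝ) : ℝ := Complex.arg ⟨a, b⟩

/-- The Cartesian-to-spherical transformation
`h (x, y, z) = (√(x² + y² + z²), atan2 (y, x), atan2 (z, √(x² + y²)))`. -/
noncomputable def hSph (v : Fin 3 → ℝ) : Fin 3 → ℝ :=
  ![Real.sqrt (v 0 ^ 2 + v 1 ^ 2 + v 2 ^ 2),
    atan2 (v 1) (v 0),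
    atan2 (v 2) (Real.sqrt (v 0 ^ 2 + v 1 ^ 2))]

/-- The measurement `m (Δγ, Δφ) = h (R_z (γ + Δγ)ᵀ u) − (Δρ, Δφ, Δη)`. -/
noncomputable def meas (u : Fin 3 → ℝ) (γ Δρ Δη Δγ Δφ : ℝ) : Fin 3 → ℝ :=
  hSph ((Rz (γ + Δγ))ᵀ.mulVec u) - ![Δρ, Δφ, Δη]

lemma Rz_transpose_mulVec (θ : ℝ) (u : Fin 3 → ℝ) :
    (Rz θ)ᵀ.mulVec u =
      ![Real.cos θ * u 0 + Real.sin θ * u 1, -Real.sin θ * u 0 + Real.cos θ * u 1, u 2] := by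
  ext i
  fin_cases i <;> simp [Rz, Matrix.mulVec, dotProduct, Fin.sum_univ_three]

lemma horizontal_sq (θ x y : ℝ) :
    (Real.cos θ * x + Real.sin θ * y) ^ 2 + (-Real.sin θ * x + Real.cos θ * y) ^ 2
      = x ^ 2 + y ^ 2 := by
  linear_combination (x ^ 2 + y ^ 2) * Real.sin_sq_add_cos_sq θ

/-- Away from the z-axis, rotating by `-θ` lowers the azimuth by `θ` modulo `2π`. The origin is
excluded because `Complex.arg 0 = 0` is unaffected by rotation. -/
lemma atan2_rotate (θ x y : ℝ) (h : ¬(x = 0 ∧ y = 0)) :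
    (atan2 (-Real.sin θ * x + Real.cos θ * y) (Real.cos θ * x + Real.sin θ * y) : Real.Angle)
      = (atan2 y x : Real.Angle) - (θ : Real.Angle) := by
  have hz : (⟨x, y⟩ : ℂ) ≠ 0 := by
    simpa [Complex.ext_iff] using h
  have hr : (⟨Real.cos (-θ), Real.sin (-θ)⟩ : ℂ) ≠ 0 := by
    intro h0
    have h1 := congrArg Complex.re h0
    have h2 := congrArg Complex.im h0
    simp only [Complex.zero_re, Complex.zero_im] at h1 h2
    have := Real.sin_sq_add_cos_sq (-θ)
    simp [h1, h2] at this
  have hmul : (⟨Real.cos θ * x + Real.sin θ * y, -Real.sin θ * x + Real.cos θ * y⟩ : ℂ)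
      = ⟨x, y⟩ * ⟨Real.cos (-θ), Real.sin (-θ)⟩ := by
    apply Complex.ext <;> simp <;> ring
  have harg : (Complex.arg ⟨Real.cos (-θ), Real.sin (-θ)⟩ : Real.Angle)
      = ((-θ : ℝ) : Real.Angle) := by
    rw [← Complex.arg_cos_add_sin_mul_I_coe_angle ((-θ : ℝ) : Real.Angle)]
    congr 2
    apply Complex.ext <;>
      simp [Real.Angle.cos_coe, Real.Angle.sin_coe, -Complex.ofReal_cos, -Complex.ofReal_sin]
  unfold atan2
  rw [hmul, Complex.arg_mul_coe_angle hz hr, harg, Real.Angle.coe_neg, sub_eq_add_neg]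

/-- the measurement depends on `(Δγ, Δφ)` only through the sum `Δγ + Δφ`:
if `Δγ₁ + Δφ₁ = Δγ₂ + Δφ₂` then the first and third components of the two measurements
coincide, and the second components are congruent modulo `2π`. -/
theorem meas_depends_only_on_sum (u : Fin 3 → ℝ) (hu : ¬(u 0 = 0 ∧ u 1 = 0))
    (γ Δρ Δη : ℝ) (Δγ₁ Δφ₁ Δγ₂ Δφ₂ : ℝ) (hsum : Δγ₁ + Δφ₁ = Δγ₂ + Δφ₂) :
    meas u γ Δρ Δη Δγ₁ Δφ₁ 0 = meas u γ Δρ Δη Δγ₂ Δφ₂ 0 ∧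
    meas u γ Δρ Δη Δγ₁ Δφ₁ 2 = meas u γ Δρ Δη Δγ₂ Δφ₂ 2 ∧
    ∃ k : ℤ, meas u γ Δρ Δη Δγ₁ Δφ₁ 1 - meas u γ Δρ Δη Δγ₂ Δφ₂ 1 = 2 * π * k := by
  simp only [meas, hSph, Rz_transpose_mulVec, Pi.sub_apply, Matrix.cons_val, horizontal_sq]
  refine ⟨trivial, trivial, ?_⟩
  apply Real.Angle.angle_eq_iff_two_pi_dvd_sub.mp
  rw [Real.Angle.coe_sub, Real.Angle.coe_sub, atan2_rotate _ _ _ hu, atan2_rotate _ _ _ hu,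
    sub_sub, sub_sub, ← Real.Angle.coe_add, ← Real.Angle.coe_add, add_assoc, add_assoc, hsum]
end

section
/- Let M ≥ 1, let θ ∈ ℝ^M, and let G be a symmetric positive definite real 2M×2M matrix. Define S ∈ ℝ^{2M×M} by S_{2m−1,m} = cos θ_m, S_{2m,m} = sin θ_m and all other entries zero, and define C ∈ ℝ^{2M×M} by C_{2m−1,m} = −sin θ_m, C_{2m,m} = cos θ_m and all other entries zero. Then the 2M×2M matrix D = [S | G·C] obtained by concatenating the columns of S with the columns of G·C is invertible. -/
/-!
Write a vector of `ℝ^{2M}` as a pair `(a, b)`, so that `D (a, b) = S a + G C b`. The columns of `S`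
and `C` together form an orthonormal basis of `ℝ^{2M}` (in each coordinate plane, a rotated frame):
`Cᵀ S = 0` and `Cᵀ C = Sᵀ S = 1`. If `D (a, b) = 0`, pairing with `C b` kills the term `S a` and
leaves `(C b)ᵀ G (C b) = 0`, so `C b = 0` by positive definiteness. Hence `b = Cᵀ C b = 0`, then
`S a = 0`, and `a = Sᵀ S a = 0`. Thus `D` is injective, and, being square, invertible.
-/

open Matrix

/-- The `2M × M` matrix `S` with `S_{(m,0),m} = cos θ_m`, `S_{(m,1),m} = sin θ_m` and all
other entries zero. Rows of `ℝ^{2M}` are indexed by `Fin M × Fin 2`, the row `(m, 0)`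
playing the role of row `2m−1` and `(m, 1)` the role of row `2m`. -/
noncomputable def Smat {M : ℕ} (θ : Fin M → ℝ) : Matrix (Fin M × Fin 2) (Fin M) ℝ :=
  fun p m => if p.1 = m then (if p.2 = 0 then Real.cos (θ m) else Real.sin (θ m)) else 0

/-- The `2M × M` matrix `C` with `C_{(m,0),m} = −sin θ_m`, `C_{(m,1),m} = cos θ_m` and all
other entries zero. -/
noncomputable def Cmat {M : ℕ} (θ : Fin M → ℝ) : Matrix (Fin M × Fin 2) (Fin M) ℝ :=
  fun p m => if p.1 = m then (if p.2 = 0 then -Real.sin (θ m) else Real.cos (θ m)) else 0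

lemma Cmat_transpose_mul_Smat {M : ℕ} (θ : Fin M → ℝ) : (Cmat θ)ᵀ * Smat θ = 0 := by
  ext i j
  by_cases h : i = j
  · subst h
    simp [Matrix.mul_apply, Fintype.sum_prod_type, Cmat, Smat]
    ring
  · simp [Matrix.mul_apply, Fintype.sum_prod_type, Cmat, Smat, Ne.symm h]

lemma Cmat_transpose_mul_self {M : ℕ} (θ : Fin M → ℝ) : (Cmat θ)ᵀ * Cmat θ = 1 := by
  ext i j
  by_cases h : i = j
  · subst h
    simp [Matrix.mul_apply, Fintype.sum_prod_type, Cmat, ← sq]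
  · simp [Matrix.mul_apply, Fintype.sum_prod_type, Cmat, h, Ne.symm h]

lemma Smat_transpose_mul_self {M : ℕ} (θ : Fin M → ℝ) : (Smat θ)ᵀ * Smat θ = 1 := by
  ext i j
  by_cases h : i = j
  · subst h
    simp [Matrix.mul_apply, Fintype.sum_prod_type, Smat, ← sq]
  · simp [Matrix.mul_apply, Fintype.sum_prod_type, Smat, h, Ne.symm h]

/-- for any `θ ∈ ℝ^M` and symmetric positive definite `G`, the `2M × 2M`
matrix `D = [S | G·C]` (columns of `S` followed by columns of `G·C`) is invertible. -/
theorem jacobian_invertible {M : ℕ} (hM : 1 ≤ M) (θ : Fin M → ℝ)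
    (G : Matrix (Fin M × Fin 2) (Fin M × Fin 2) ℝ) (hG : G.PosDef) :
    let D : Matrix (Fin M × Fin 2) (Fin M × Fin 2) ℝ :=
      fun p q => if q.2 = 0 then Smat θ p q.1 else (G * Cmat θ) p q.1
    IsUnit D := by
  intro D
  rw [← Matrix.mulVec_injective_iff_isUnit]
  refine (injective_iff_map_eq_zero D.mulVecLin).2 fun v hv => ?_
  set a : Fin M → ℝ := fun m => v (m, 0) with ha
  set b : Fin M → ℝ := fun m => v (m, 1) with hb
  have hD : Smat θ *ᵥ a + G *ᵥ (Cmat θ *ᵥ b) = 0 := by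
    rw [← hv, Matrix.mulVecLin_apply, Matrix.mulVec_mulVec]
    ext p
    simp [D, ha, hb, Matrix.mulVec, dotProduct, Fintype.sum_prod_type, Finset.sum_add_distrib]
  have hC : Cmat θ *ᵥ b = 0 := by
    by_contra hne
    have hpos := hG.dotProduct_mulVec_pos hne
    have horth : (Cmat θ *ᵥ b) ⬝ᵥ (Smat θ *ᵥ a) = 0 := by
      rw [← Matrix.vecMul_transpose, ← Matrix.dotProduct_mulVec, Matrix.mulVec_mulVec,
        Cmat_transpose_mul_Smat, Matrix.zero_mulVec, dotProduct_zero]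
    have hpair := congrArg (fun w => (Cmat θ *ᵥ b) ⬝ᵥ w) hD
    simp only [dotProduct_add, horth, zero_add, dotProduct_zero] at hpair
    simp only [star_trivial] at hpos
    exact hpos.ne' hpair
  have hb0 : b = 0 := by
    rw [← Matrix.one_mulVec b, ← Cmat_transpose_mul_self θ, ← Matrix.mulVec_mulVec, hC,
      Matrix.mulVec_zero]
  have hS : Smat θ *ᵥ a = 0 := by simpa [hC] using hD
  have ha0 : a = 0 := by
    rw [← Matrix.one_mulVec a, ← Smat_transpose_mul_self θ, ← Matrix.mulVec_mulVec, hS,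
      Matrix.mulVec_zero]
  ext ⟨m, i⟩
  fin_cases i
  · exact congrFun ha0 m
  · exact congrFun hb0 m
end

section
/- Let Q be a symmetric positive definite real n×n matrix, let H̄ be a real n×2M matrix with trivial kernel (full column rank), let c̄ ∈ ℝⁿ, and let θ̄ ∈ ℝ^M be such that H̄ x(θ̄) + c̄ = 0, where x(θ) ∈ ℝ^{2M} denotes the vector with (x(θ)_{2m−1}, x(θ)_{2m}) = (cos θ_m, sin θ_m) for m = 1,…,M. Define f : ℝ^{n×2M} × ℝⁿ × ℝ^M × ℝ^M → ℝ^{2M} by f(ΔH, Δc, θ, η) = 2 (H̄+ΔH)ᵀ Q (H̄+ΔH) x(θ) + 2 (H̄+ΔH)ᵀ Q (c̄+Δc) + Λ(η) x(θ), where Λ(η) is the block-diagonal 2M×2M matrix whose m-th 2×2 block is η_m · I₂. Then there exist a neighborhood U of (0, 0) in ℝ^{n×2M} × ℝⁿ, a neighborhood V of (θ̄, 0) in ℝ^M × ℝ^M, and continuous functions d_θ : U → ℝ^M, d_η : U → ℝ^M with (d_θ(0,0), d_η(0,0)) = (θ̄, 0), such that for every (ΔH, Δc) ∈ U one has f(ΔH,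 Δc, d_θ(ΔH,Δc), d_η(ΔH,Δc)) = 0, and moreover (d_θ(ΔH,Δc), d_η(ΔH,Δc)) is the unique point (θ, η) ∈ V satisfying f(ΔH, Δc, θ, η) = 0. -/
/-!
The equations are smooth, and `H̄ x(θ̄) + c̄ = 0` makes `(0, 0, θ̄, 0)` a zero, so the implicit
function theorem applies as soon as the partial derivative in `(θ, η)` is invertible. Both sides
have dimension `2M`, so injectivity suffices. At `η = 0` this derivative sends `(a, b)` to
`2 H̄ᵀ Q H̄ u + v`, where `u = dx(θ̄) a` has blocks `a_m (-sin θ̄_m, cos θ̄_m)` and `v` has blocks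
`b_m (cos θ̄_m, sin θ̄_m)`. Tangent and radial directions are orthogonal, so `uᵀ v = 0`. Pairing a
kernel element with `u` gives `uᵀ H̄ᵀ Q H̄ u = 0`, and `H̄ᵀ Q H̄` is positive definite because `H̄` is
injective; hence `u = 0`, then `v = 0`, and `a = b = 0` since the blocks have norms `|a_m|` and
`|b_m|`.
-/

open Matrix

/-- The cosine-sine encoding `x(θ) ∈ ℝ^{2M}` of an angle vector `θ ∈ ℝ^M`:
`x(θ)_{(m,0)} = cos θ_m` and `x(θ)_{(m,1)} = sin θ_m`. Here `ℝ^{2M}` is modeled as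
`Fin M × Fin 2 → ℝ`, the pair `(m, 0), (m, 1)` playing the role of indices `2m−1, 2m`. -/
noncomputable def xv {M : ℕ} (θ : Fin M → ℝ) : Fin M × Fin 2 → ℝ :=
  fun p => if p.2 = 0 then Real.cos (θ p.1) else Real.sin (θ p.1)

/-- The stationarity map
`f(ΔH, Δc, θ, η) = 2 (H̄+ΔH)ᵀ Q (H̄+ΔH) x(θ) + 2 (H̄+ΔH)ᵀ Q (c̄+Δc) + Λ(η) x(θ)`,
where `Λ(η)` is the block-diagonal matrix whose `m`-th `2×2` block is `η_m I₂`. -/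
noncomputable def statMap {n M : ℕ} (Q : Matrix (Fin n) (Fin n) ℝ)
    (Hbar : Matrix (Fin n) (Fin M × Fin 2) ℝ) (cbar : Fin n → ℝ)
    (ΔH : Matrix (Fin n) (Fin M × Fin 2) ℝ) (Δc : Fin n → ℝ)
    (θ η : Fin M → ℝ) : Fin M × Fin 2 → ℝ :=
  (2 : ℝ) • ((Hbar + ΔH)ᵀ * Q * (Hbar + ΔH)).mulVec (xv θ)
    + (2 : ℝ) • ((Hbar + ΔH)ᵀ * Q).mulVec (cbar + Δc)
    + fun p => η p.1 * xv θ p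

open Filter Topology

/-- Implicit function theorem in the form needed here: the partial derivative in the second
variable is only assumed injective (equal finite dimensions make it invertible), and the
implicit function is continuous on a whole neighbourhood, because strict
differentiability makes it Lipschitz near the base point. -/
lemma exists_implicit {E₁ E₂ F : Type*}
    [NormedAddCommGroup E₁] [NormedSpace ℝ E₁] [CompleteSpace E₁]
    [NormedAddCommGroup E₂] [NormedSpace ℝ E₂] [FiniteDimensional ℝ E₂]
    [NormedAddCommGroup F] [NormedSpace ℝ F] [FiniteDimensional ℝ F]
    (f : E₁ × E₂ → F) (x : E₁) (y : E₂) (hf : ContDiff ℝ 1 f)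
    (hinj : ∀ v : E₂, fderiv ℝ f (x, y) (0, v) = 0 → v = 0)
    (hdim : Module.finrank ℝ E₂ = Module.finrank ℝ F) (h0 : f (x, y) = 0) :
    ∃ (U : Set E₁) (V : Set E₂) (ψ : E₁ → E₂), U ∈ 𝓝 x ∧ V ∈ 𝓝 y ∧ ContinuousOn ψ U ∧
      ψ x = y ∧ ∀ p ∈ U, f (p, ψ p) = 0 ∧ ψ p ∈ V ∧ ∀ v ∈ V, f (p, v) = 0 → v = ψ p := by
  have : CompleteSpace E₂ := FiniteDimensional.complete ℝ E₂
  have : CompleteSpace F := FiniteDimensional.complete ℝ F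
  have hs : HasStrictFDerivAt f (fderiv ℝ f (x, y)) (x, y) :=
    hf.hasStrictFDerivAt one_ne_zero
  have hinv : (fderiv ℝ f (x, y) ∘L .inr ℝ E₁ E₂).IsInvertible := by
    have hi : Function.Injective (fderiv ℝ f (x, y) ∘L .inr ℝ E₁ E₂).toLinearMap :=
      (injective_iff_map_eq_zero _).2 fun v hv => hinj v (by simpa using hv)
    exact ⟨(LinearEquiv.ofInjectiveOfFinrankEq _ hi hdim).toContinuousLinearEquiv, by
      ext v; rfl⟩
  have hiff := hs.eventually_apply_eq_iff_implicitFunctionOfProdDomain hinv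
  have htend := hs.tendsto_implicitFunctionOfProdDomain hinv
  obtain ⟨K, s, hs', hK⟩ :=
    (hs.hasStrictFDerivAt_implicitFunctionOfProdDomain hinv).exists_lipschitzOnWith
  set ψ := hs.implicitFunctionOfProdDomain hinv
  have hψ : ψ x = y := hiff.self_of_nhds.1 rfl
  rw [nhds_prod_eq] at hiff
  obtain ⟨U₁, hU₁, V, hV, hUV⟩ := mem_prod_iff.1 hiff
  refine ⟨U₁ ∩ s ∩ ψ ⁻¹' V, V, ψ, inter_mem (inter_mem hU₁ hs') (htend hV), hV,
    hK.continuousOn.mono fun p hp => hp.1.2, hψ, fun p hp => ⟨?_, hp.2, fun v hv h => ?_⟩⟩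
  · have h := hUV (Set.mk_mem_prod hp.1.1 hp.2)
    exact (h.2 rfl).trans h0
  · have h' := hUV (Set.mk_mem_prod hp.1.1 hv)
    exact (h'.1 (h.trans h0.symm)).symm

/-- The tangent vector `dx(θ) a`: its `m`-th block is `a_m (-sin θ_m, cos θ_m)`. -/
noncomputable def dxv {M : ℕ} (θ a : Fin M → ℝ) : Fin M × Fin 2 → ℝ :=
  fun p => if p.2 = 0 then -Real.sin (θ p.1) * a p.1 else Real.cos (θ p.1) * a p.1

lemma hasDerivAt_xv {M : ℕ} (θ a : Fin M → ℝ) (p : Fin M × Fin 2) :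
    HasDerivAt (fun t : ℝ => xv (θ + t • a) p) (dxv θ a p) 0 := by
  have h : HasDerivAt (fun t : ℝ => (θ + t • a) p.1) (a p.1) 0 := by
    simpa using ((hasDerivAt_id (0 : ℝ)).mul_const (a p.1)).const_add (θ p.1)
  unfold xv dxv
  split_ifs
  · simpa using h.cos
  · simpa using h.sin

/-- Derivative at the base point along the line `t ↦ (0, 0, θ + t a, t b)`. -/
lemma hasDerivAt_statMap {n M : ℕ} (Q : Matrix (Fin n) (Fin n) ℝ)
    (Hbar : Matrix (Fin n) (Fin M × Fin 2) ℝ) (cbar : Fin n → ℝ) (θ a b : Fin M → ℝ) :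
    HasDerivAt (fun t : ℝ => statMap Q Hbar cbar 0 0 (θ + t • a) (t • b))
      ((2 : ℝ) • (Hbarᵀ * Q * Hbar).mulVec (dxv θ a) + fun p => b p.1 * xv θ p) 0 := by
  rw [hasDerivAt_pi]
  intro p
  have h1 : HasDerivAt (fun t : ℝ => ((Hbarᵀ * Q * Hbar).mulVec (xv (θ + t • a))) p)
      ((Hbarᵀ * Q * Hbar).mulVec (dxv θ a) p) 0 := by
    simp only [mulVec, dotProduct]
    exact HasDerivAt.fun_sum fun q _ => (hasDerivAt_xv θ a q).const_mul _
  have h2 : HasDerivAt (fun t : ℝ => (t * b p.1) * xv (θ + t • a) p) (b p.1 * xv θ p) 0 := by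
    simpa using ((hasDerivAt_id (0 : ℝ)).mul_const (b p.1)).fun_mul (hasDerivAt_xv θ a p)
  simpa [statMap] using ((h1.const_mul 2).add_const
    (2 * ((Hbarᵀ * Q).mulVec cbar) p)).fun_add h2

/-- Smoothness of the stationarity map. Matrices carry no global norm, so `ΔH` ranges over the
underlying function type, whose topology is the one on matrices. -/
lemma contDiff_statMap {n M : ℕ} (Q : Matrix (Fin n) (Fin n) ℝ)
    (Hbar : Matrix (Fin n) (Fin M × Fin 2) ℝ) (cbar : Fin n → ℝ) :
    ContDiff ℝ 1 (fun z : ((Fin n → Fin M × Fin 2 → ℝ) × (Fin n → ℝ)) ×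
      ((Fin M → ℝ) × (Fin M → ℝ)) => statMap Q Hbar cbar (of z.1.1) z.1.2 z.2.1 z.2.2) := by
  rw [contDiff_pi]
  intro p
  have hx : ∀ q : Fin M × Fin 2, ContDiff ℝ 1 (fun z : ((Fin n → Fin M × Fin 2 → ℝ) ×
      (Fin n → ℝ)) × ((Fin M → ℝ) × (Fin M → ℝ)) => xv z.2.1 q) := by
    intro q
    unfold xv
    split_ifs <;> fun_prop
  simp only [statMap, Pi.add_apply, Pi.smul_apply, smul_eq_mul, mulVec, dotProduct,
    Matrix.mul_apply, Matrix.transpose_apply, Matrix.add_apply, of_apply]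
  fun_prop

/-- The partial derivative in `(θ, η)` at the base point is injective. -/
lemma kernel_trivial {n M : ℕ}
    (Q : Matrix (Fin n) (Fin n) ℝ) (hQ : Q.PosDef)
    (Hbar : Matrix (Fin n) (Fin M × Fin 2) ℝ)
    (hH : ∀ x : Fin M × Fin 2 → ℝ, Hbar.mulVec x = 0 → x = 0) (θ a b : Fin M → ℝ)
    (h : (2 : ℝ) • (Hbarᵀ * Q * Hbar).mulVec (dxv θ a) + (fun p => b p.1 * xv θ p) = 0) :
    a = 0 ∧ b = 0 := by
  have hpos : (Hbarᵀ * Q * Hbar).PosDef := by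
    rw [← conjTranspose_eq_transpose_of_trivial]
    exact hQ.conjTranspose_mul_mul_same
      ((injective_iff_map_eq_zero Hbar.mulVecLin).2 fun v hv => hH v hv)
  have horth : dxv θ a ⬝ᵥ (fun p => b p.1 * xv θ p) = 0 := by
    simp only [dotProduct, Fintype.sum_prod_type, Fin.sum_univ_two]
    refine Finset.sum_eq_zero fun m _ => ?_
    simp [dxv, xv]
    ring
  have hu : dxv θ a = 0 := by
    by_contra hne
    have hlt := hpos.dotProduct_mulVec_pos hne
    have h' := congrArg (fun w => dxv θ a ⬝ᵥ w) h
    simp only [dotProduct_add, dotProduct_smul, horth, dotProduct_zero, smul_eq_mul] at h'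
    simp only [star_trivial] at hlt
    linarith
  have hv : (fun p : Fin M × Fin 2 => b p.1 * xv θ p) = 0 := by simpa [hu] using h
  constructor
  · ext m
    have h0 := congrFun hu (m, 0)
    have h1 := congrFun hu (m, 1)
    simp only [dxv, Pi.zero_apply, if_true, one_ne_zero, if_false] at h0 h1 ⊢
    linear_combination -Real.sin (θ m) * h0 + Real.cos (θ m) * h1
      - a m * Real.sin_sq_add_cos_sq (θ m)
  · ext m
    have h0 := congrFun hv (m, 0)
    have h1 := congrFun hv (m, 1)
    simp only [xv, Pi.zero_apply, if_true, one_ne_zero, if_false] at h0 h1 ⊢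
    linear_combination Real.cos (θ m) * h0 + Real.sin (θ m) * h1
      - b m * Real.sin_sq_add_cos_sq (θ m)

/-- implicit function theorem for the stationarity conditions: if `Q` is
symmetric positive definite, `H̄` has trivial kernel, and `H̄ x(θ̄) + c̄ = 0`, then there are
neighborhoods `U` of `(0,0)` and `V` of `(θ̄, 0)` and continuous functions `d_θ, d_η` on `U`
with `(d_θ(0,0), d_η(0,0)) = (θ̄, 0)` such that for every `(ΔH, Δc) ∈ U`,
`f(ΔH, Δc, d_θ(ΔH,Δc), d_η(ΔH,Δc)) = 0` and `(d_θ(ΔH,Δc), d_η(ΔH,Δc))` is the unique zero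
of `f(ΔH, Δc, ·, ·)` in `V`. -/
theorem implicit_function_for_stationarity {n M : ℕ}
    (Q : Matrix (Fin n) (Fin n) ℝ) (hQ : Q.PosDef)
    (Hbar : Matrix (Fin n) (Fin M × Fin 2) ℝ)
    (hH : ∀ x : Fin M × Fin 2 → ℝ, Hbar.mulVec x = 0 → x = 0)
    (cbar : Fin n → ℝ) (θbar : Fin M → ℝ)
    (hsol : Hbar.mulVec (xv θbar) + cbar = 0) :
    ∃ (U : Set (Matrix (Fin n) (Fin M × Fin 2) ℝ × (Fin n → ℝ)))
      (V : Set ((Fin M → ℝ) × (Fin M → ℝ)))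
      (dθ dη : Matrix (Fin n) (Fin M × Fin 2) ℝ × (Fin n → ℝ) → Fin M → ℝ),
      U ∈ nhds (0, 0) ∧ V ∈ nhds (θbar, 0) ∧
      ContinuousOn (fun p => (dθ p, dη p)) U ∧
      dθ (0, 0) = θbar ∧ dη (0, 0) = 0 ∧
      ∀ p ∈ U,
        statMap Q Hbar cbar p.1 p.2 (dθ p) (dη p) = 0 ∧
        (dθ p, dη p) ∈ V ∧
        ∀ θη ∈ V, statMap Q Hbar cbar p.1 p.2 θη.1 θη.2 = 0 → θη = (dθ p, dη p) := by
  let f : ((Fin n → Fin M × Fin 2 → ℝ) × (Fin n → ℝ)) × ((Fin M → ℝ) × (Fin M → ℝ)) →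
      Fin M × Fin 2 → ℝ := fun z => statMap Q Hbar cbar (of z.1.1) z.1.2 z.2.1 z.2.2
  have hf : ContDiff ℝ 1 f := contDiff_statMap Q Hbar cbar
  have h0 : f ((0, 0), (θbar, 0)) = 0 := by
    have hz : (of (0 : Fin n → Fin M × Fin 2 → ℝ)) = 0 := rfl
    have hc : cbar = -Hbar.mulVec (xv θbar) := (neg_eq_of_add_eq_zero_right hsol).symm
    ext p
    simp [f, statMap, hz, hc, mulVec_neg, mulVec_mulVec]
  have hinj : ∀ v, fderiv ℝ f ((0, 0), (θbar, 0)) (0, v) = 0 → v = 0 := by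
    rintro ⟨a, b⟩ hv
    -- the partial derivative is computed along a line through the base point
    have hline : HasDerivAt (fun t : ℝ => f (((0, 0), (θbar, 0)) + t • (0, (a, b))))
        (fderiv ℝ f ((0, 0), (θbar, 0)) (0, (a, b))) 0 :=
      ((hf.differentiable one_ne_zero _).hasFDerivAt.hasLineDerivAt _)
    have hstat := hasDerivAt_statMap Q Hbar cbar θbar a b
    have heq : (fun t : ℝ => f (((0, 0), (θbar, 0)) + t • (0, (a, b)))) =
        fun t : ℝ => statMap Q Hbar cbar 0 0 (θbar + t • a) (t • b) := by
      have hz : (of (0 : Fin n → Fin M × Fin 2 → ℝ)) = 0 := rfl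
      ext t p
      simp [f, hz]
    rw [heq] at hline
    obtain ⟨ha, hb⟩ := kernel_trivial Q hQ Hbar hH θbar a b ((hstat.unique hline).trans hv)
    simp [ha, hb]
  have hdim : Module.finrank ℝ ((Fin M → ℝ) × (Fin M → ℝ)) =
      Module.finrank ℝ (Fin M × Fin 2 → ℝ) := by
    simp [mul_two]
  obtain ⟨U, V, ψ, hU, hV, hcont, hψ, hsolve⟩ := exists_implicit f (0, 0) (θbar, 0) hf hinj hdim h0
  exact ⟨U, V, fun p => (ψ p).1, fun p => (ψ p).2, hU, hV, hcont, congrArg Prod.fst hψ,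
    congrArg Prod.snd hψ, fun p hp => hsolve p hp⟩
end
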